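/- arXiv:0906.1056 — 6 statements merged into one kernel-verified Lean document; each statement's English description precedes it below -/
import Mathlib

section
/- Let J₊ and J₋ be two complex structures (linear endomorphisms squaring to −id) on a real vector space V. Then J₊ ∘ [J₊,J₋] ∘ J₊ = [J₊,J₋] and J₋ ∘ [J₊,J₋] ∘ J₋ = [J₊,J₋]. (Equivalently, the bivector σ = [J₊,J₋]g⁻¹ is of type (2,0)+(0,2) with respect to both complex structures, so that σ is the real part of a holomorphic Poisson structure for each of J₊ and J₋.) -/
/-- For two complex structures `J₊`, `J₋` on a real vector space,
`J₊ ∘ [J₊,J₋] ∘ J₊ = [J₊,J₋]` and `J₋ ∘ [J₊,J₋] ∘ J₋ = [J₊,J₋]`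
(i.e. `σ = [J₊,J₋] g⁻¹` is of type (2,0)+(0,2) for both complex structures). -/
theorem commutator_type_20_02
    {V : Type*} [AddCommGroup V] [Module ℝ V]
    (Jp Jm : V →ₗ[ℝ] V)
    (hJp : Jp ∘ₗ Jp = -LinearMap.id) (hJm : Jm ∘ₗ Jm = -LinearMap.id) :
    Jp ∘ₗ (Jp ∘ₗ Jm - Jm ∘ₗ Jp) ∘ₗ Jp = Jp ∘ₗ Jm - Jm ∘ₗ Jp ∧
    Jm ∘ₗ (Jp ∘ₗ Jm - Jm ∘ₗ Jp) ∘ₗ Jm = Jp ∘ₗ Jm - Jm ∘ₗ Jp := by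
  have hp : ∀ x, Jp (Jp x) = -x := fun x => by simpa using LinearMap.congr_fun hJp x
  have hm : ∀ x, Jm (Jm x) = -x := fun x => by simpa using LinearMap.congr_fun hJm x
  -- Expanding `J [J₊,J₋] J`, each of the two terms contains the square `J ∘ J = -id`.
  constructor <;> ext x <;>
    simp only [LinearMap.comp_apply, LinearMap.sub_apply, map_sub, map_neg, hp, hm] <;> abel
end

section
/- Let J₊ and J₋ be two complex structures (linear endomorphisms squaring to −id) on a real vector space V. Then the range of [J₊,J₋] is contained in the intersection of the range of J₊ + J₋ and the range of J₊ − J₋. (This is the linear-algebra statement that every symplectic leaf of the Poisson structure σ = [J₊,J₋]g⁻¹ lies inside a leaf of each of the Poisson structures π± = (J₊ ± J₋)g⁻¹ on a generalized Kähler manifold.) -/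
/-- For two complex structures `J₊`, `J₋` on a real vector space,
the range of `[J₊,J₋]` is contained in the intersection of the ranges of
`J₊ + J₋` and `J₊ − J₋` (a leaf of `σ` lies inside leaves of `π±`). -/
theorem range_commutator_le_inf_ranges
    {V : Type*} [AddCommGroup V] [Module ℝ V]
    (Jp Jm : V →ₗ[ℝ] V)
    (hJp : Jp ∘ₗ Jp = -LinearMap.id) (hJm : Jm ∘ₗ Jm = -LinearMap.id) :
    LinearMap.range (Jp ∘ₗ Jm - Jm ∘ₗ Jp) ≤
      LinearMap.range (Jp + Jm) ⊓ LinearMap.range (Jp - Jm) := by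
  have hp (x : V) : Jp (Jp x) = -x := by simpa using LinearMap.congr_fun hJp x
  have hm (x : V) : Jm (Jm x) = -x := by simpa using LinearMap.congr_fun hJm x
  rintro _ ⟨x, rfl⟩
  -- Since `J₊² = J₋²`, the commutator factors as
  -- `[J₊,J₋] = (J₊ + J₋)(J₋ - J₊) = (J₊ - J₋)(J₊ + J₋)`.
  refine ⟨⟨Jm x - Jp x, ?_⟩, ⟨Jp x + Jm x, ?_⟩⟩
  · simp only [LinearMap.add_apply, LinearMap.sub_apply, LinearMap.comp_apply, map_sub, hp, hm]
    abel
  · simp only [LinearMap.sub_apply, LinearMap.comp_apply, map_add, hp, hm]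
    abel
end

section
/- Let J₊ and J₋ be two complex structures (linear endomorphisms squaring to −id) on a real vector space V. Then the kernel of [J₊,J₋] is the (internal direct) sum of the kernel of J₊ + J₋ and the kernel of J₊ − J₋: ker[J₊,J₋] = ker(J₊ + J₋) ⊕ ker(J₊ − J₋), these two subspaces having trivial intersection. -/
/-!
If `J₊ v = ∓J₋ v`, then `J₊ J₋ v` and `J₋ J₊ v` both equal `±v`, so both kernels lie in the kernel of
the commutator. Conversely, if `J₊ J₋ v = J₋ J₊ v`, then
`v = ½ (v + J₊ J₋ v) + ½ (v - J₊ J₋ v)`, and these summands lie in `ker (J₊ + J₋)` and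
`ker (J₊ - J₋)` respectively. A vector in both kernels satisfies `J₊ v = 0`, hence `v = 0`.
-/

/-- For two complex structures `J₊`, `J₋` on a real vector space,
`ker [J₊,J₋] = ker (J₊+J₋) ⊕ ker (J₊−J₋)` as an internal direct sum:
the kernel of the commutator is the sum of the two kernels, and these have
trivial intersection. -/
theorem ker_commutator_eq_ker_sum_sup_ker_diff
    {V : Type*} [AddCommGroup V] [Module ℝ V]
    (Jp Jm : V →ₗ[ℝ] V)
    (hJp : Jp ∘ₗ Jp = -LinearMap.id) (hJm : Jm ∘ₗ Jm = -LinearMap.id) :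
    LinearMap.ker (Jp ∘ₗ Jm - Jm ∘ₗ Jp) =
      LinearMap.ker (Jp + Jm) ⊔ LinearMap.ker (Jp - Jm) ∧
    LinearMap.ker (Jp + Jm) ⊓ LinearMap.ker (Jp - Jm) = ⊥ := by
  have hp : ∀ v, Jp (Jp v) = -v := fun v => by simpa using LinearMap.congr_fun hJp v
  have hm : ∀ v, Jm (Jm v) = -v := fun v => by simpa using LinearMap.congr_fun hJm v
  refine ⟨le_antisymm ?_ (sup_le ?_ ?_), ?_⟩
  · intro v hv
    have hc : Jp (Jm v) = Jm (Jp v) := by simpa [sub_eq_zero] using hv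
    rw [Submodule.mem_sup]
    refine ⟨(1 / 2 : ℝ) • (v + Jp (Jm v)), ?_, (1 / 2 : ℝ) • (v - Jp (Jm v)), ?_, by module⟩
    · have h : Jm (Jp (Jm v)) = -Jp v := by rw [hc, hm]
      simp only [LinearMap.mem_ker, LinearMap.add_apply, map_smul, map_add, hp, h]
      module
    · have h : Jm (Jp (Jm v)) = -Jp v := by rw [hc, hm]
      simp only [LinearMap.mem_ker, LinearMap.sub_apply, map_smul, map_sub, hp, h]
      module
  · intro v hv
    have h : Jp v = -Jm v := by simpa [add_eq_zero_iff_eq_neg] using hv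
    have h' : Jm v = -Jp v := by rw [h, neg_neg]
    have h₁ : Jp (Jm v) = v := by rw [h', map_neg, hp, neg_neg]
    have h₂ : Jm (Jp v) = v := by rw [h, map_neg, hm, neg_neg]
    simp [h₁, h₂]
  · intro v hv
    have h : Jp v = Jm v := by simpa [sub_eq_zero] using hv
    have h₁ : Jp (Jm v) = -v := by rw [← h, hp]
    have h₂ : Jm (Jp v) = -v := by rw [h, hm]
    simp [h₁, h₂]
  · rw [eq_bot_iff]
    rintro v ⟨h₁, h₂⟩
    have h₁ : Jp v + Jm v = 0 := by simpa using h₁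
    have h₂ : Jp v - Jm v = 0 := by simpa using h₂
    have h₀ : Jp v = 0 := by
      calc Jp v = (1 / 2 : ℝ) • ((Jp v + Jm v) + (Jp v - Jm v)) := by module
        _ = 0 := by rw [h₁, h₂]; simp
    have h := hp v
    rw [h₀, map_zero] at h
    simpa using h.symm
end

section
/- Let J₊ and J₋ be two Hermitian complex structures on a finite-dimensional real inner product space V. Then the range of [J₊,J₋] equals the intersection of the range of J₊ + J₋ and the range of J₊ − J₋. (This is the linear-algebra statement that on a generalized Kähler manifold the symplectic leaves of the Poisson structures π₊ = (J₊ + J₋)g⁻¹ and π₋ = (J₊ − J₋)g⁻¹ intersect exactly along a leaf of σ = [J₊,J₋]g⁻¹.) -/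
/-!
Put `A = J₊ + J₋` and `B = J₊ - J₋`. Expanding with `J₊² = J₋² = -1` gives
`B A = -A B = [J₊,J₋]` and `A² + B² = -4`. The first identity puts the range of the commutator
inside both ranges. Conversely, if `v = A x = B y`, then
`-4 v = A² B y + B² A x = B A (A y) - B A (B x) = [J₊,J₋] (A y - B x)`.
-/

open RealInnerProductSpace

/-- For two Hermitian complex structures `J₊`, `J₋` on a
finite-dimensional real inner product space, the range of `[J₊,J₋]` equals the
intersection of the ranges of `J₊ + J₋` and `J₊ − J₋` (the leaves of `π₊` and
`π₋` intersect exactly along a leaf of `σ`). -/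
theorem range_commutator_eq_inf_ranges
    {V : Type*} [NormedAddCommGroup V] [InnerProductSpace ℝ V]
    [FiniteDimensional ℝ V]
    (Jp Jm : V →ₗ[ℝ] V)
    (hJp : Jp ∘ₗ Jp = -LinearMap.id) (hJm : Jm ∘ₗ Jm = -LinearMap.id)
    (hJpH : ∀ x y : V, ⟪Jp x, Jp y⟫ = ⟪x, y⟫)
    (hJmH : ∀ x y : V, ⟪Jm x, Jm y⟫ = ⟪x, y⟫) :
    LinearMap.range (Jp ∘ₗ Jm - Jm ∘ₗ Jp) =
      LinearMap.range (Jp + Jm) ⊓ LinearMap.range (Jp - Jm) := by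
  have hp : ∀ z, Jp (Jp z) = -z := fun z => by simpa using LinearMap.congr_fun hJp z
  have hm : ∀ z, Jm (Jm z) = -z := fun z => by simpa using LinearMap.congr_fun hJm z
  apply le_antisymm
  · rintro _ ⟨x, rfl⟩
    refine ⟨⟨-(Jp x - Jm x), ?_⟩, ⟨Jp x + Jm x, ?_⟩⟩
    · simp only [LinearMap.add_apply, LinearMap.sub_apply, LinearMap.comp_apply, map_sub, map_neg,
        hp, hm]
      abel
    · simp only [LinearMap.sub_apply, LinearMap.comp_apply, map_add, hp, hm]
      abel
  · rintro v ⟨⟨x, hx⟩, ⟨y, hy⟩⟩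
    simp only [LinearMap.add_apply, LinearMap.sub_apply] at hx hy
    -- The witness comes from `-4 v = [J₊,J₋] (A y - B x)`.
    refine ⟨(1 / 4 : ℝ) • ((Jp x - Jm x) - (Jp y + Jm y)), ?_⟩
    have hBx : (Jp ∘ₗ Jm - Jm ∘ₗ Jp) (Jp x - Jm x) = -(Jp - Jm) ((Jp - Jm) v) := by
      rw [← hx]
      simp only [LinearMap.sub_apply, LinearMap.comp_apply, map_add, map_sub, map_neg, hp, hm]
      abel
    have hAy : (Jp ∘ₗ Jm - Jm ∘ₗ Jp) (Jp y + Jm y) = (Jp + Jm) ((Jp + Jm) v) := by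
      rw [← hy]
      simp only [LinearMap.add_apply, LinearMap.sub_apply, LinearMap.comp_apply, map_add, map_sub,
        map_neg, hp, hm]
      abel
    rw [map_smul, map_sub, hBx, hAy]
    simp only [LinearMap.add_apply, LinearMap.sub_apply, map_add, map_sub, hp, hm]
    module
end

section
/- Let J₊ and J₋ be two complex structures (linear endomorphisms squaring to −id) on a real vector space V such that S = [J₊,J₋] is invertible. Then J₊ ∘ S⁻¹ ∘ J₊ = S⁻¹ and J₋ ∘ S⁻¹ ∘ J₋ = S⁻¹. (Equivalently, the symplectic form Ω = σ⁻¹ is of type (2,0)+(0,2) with respect to both complex structures, so that Ω + iΩ± are holomorphic symplectic structures for J±.) -/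
/-! Since `J₊² = J₋² = -1`, the commutator `S = J₊J₋ - J₋J₊` anticommutes with both `J₊` and `J₋`.
Conjugating by `S⁻¹`, so does `S⁻¹`; hence `J S⁻¹ J = -S⁻¹ J² = S⁻¹` for `J = J₊, J₋`. -/

lemma mul_inv_mul_self_of_anticomm {R : Type*} [Ring R] {J S T : R} (hJ : J * J = -1)
    (hTS : T * S = 1) (hST : S * T = 1) (h : J * S = -(S * J)) : J * T * J = T := by
  have hJT : J * T = -(T * J) := by
    calc J * T = (T * S) * J * T := by rw [hTS, one_mul]
      _ = -(T * (-(S * J)) * T) := by noncomm_ring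
      _ = -(T * J * (S * T)) := by rw [← h]; noncomm_ring
      _ = -(T * J) := by rw [hST, mul_one]
  rw [hJT, neg_mul, mul_assoc, hJ, mul_neg, mul_one, neg_neg]

/-- If `J₊`, `J₋` are complex structures on a real vector space
and `S = [J₊,J₋]` is invertible with inverse `Sinv`, then
`J₊ ∘ S⁻¹ ∘ J₊ = S⁻¹` and `J₋ ∘ S⁻¹ ∘ J₋ = S⁻¹` (the symplectic form
`Ω = σ⁻¹` is of type (2,0)+(0,2) with respect to both complex structures). -/
theorem inv_commutator_type_20_02
    {V : Type*} [AddCommGroup V] [Module ℝ V]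
    (Jp Jm Sinv : V →ₗ[ℝ] V)
    (hJp : Jp ∘ₗ Jp = -LinearMap.id) (hJm : Jm ∘ₗ Jm = -LinearMap.id)
    (hSl : Sinv ∘ₗ (Jp ∘ₗ Jm - Jm ∘ₗ Jp) = LinearMap.id)
    (hSr : (Jp ∘ₗ Jm - Jm ∘ₗ Jp) ∘ₗ Sinv = LinearMap.id) :
    Jp ∘ₗ Sinv ∘ₗ Jp = Sinv ∧ Jm ∘ₗ Sinv ∘ₗ Jm = Sinv := by
  -- Composition is multiplication in the ring `Module.End ℝ V`.
  have hp : (Jp : Module.End ℝ V) * Jp = -1 := hJp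
  have hm : (Jm : Module.End ℝ V) * Jm = -1 := hJm
  have hl : (Sinv : Module.End ℝ V) * (Jp * Jm - Jm * Jp) = 1 := hSl
  have hr : (Jp * Jm - Jm * Jp : Module.End ℝ V) * Sinv = 1 := hSr
  constructor
  · refine mul_inv_mul_self_of_anticomm (R := Module.End ℝ V) hp hl hr ?_
    rw [mul_sub, sub_mul, ← mul_assoc, hp, mul_assoc Jm, hp, mul_assoc]
    noncomm_ring
  · refine mul_inv_mul_self_of_anticomm (R := Module.End ℝ V) hm hl hr ?_
    rw [mul_sub, sub_mul, ← mul_assoc Jm Jm, hm, mul_assoc Jp, hm, mul_assoc]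
    noncomm_ring
end

section
/- Let X be a set indexed over an index set I, and for each ordered pair (α,β) ∈ I × I let h⁺_{αβ}, h⁻_{αβ} : X → ℂ∖{0} be nonvanishing complex-valued functions, and for each ordered triple (α,β,γ) let G_{αβγ}, F_{αβγ} : X → ℂ∖{0} be nonvanishing functions. Suppose that at every point the 'bihermitian' conditions hold: G_{αβγ} · F_{αβγ}⁻¹ = h⁺_{αβ} h⁺_{βγ} h⁺_{γα} and G_{αβγ} · conj(F_{αβγ}) = h⁻_{αβ} h⁻_{βγ} h⁻_{γα}. Then the functions t_{αβ} := h⁺_{αβ} · conj(h⁻_{αβ}) · (h⁻_{αβ})⁻¹ · conj(h⁺_{αβ})⁻¹ satisfy the Čech cocycle condition t_{αβ} t_{βγ} t_{γα} = 1 at every point, for all triples (α,β,γ). (This is the cocycle underlying the existence of local generalized Kähler potentials K_α with t_{αβ} = e^{K_α}e^{−K_β} in the gerbe description of generalized Kähler geometry.) -/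
open Complex

/-- Given nonvanishing functions `h⁺_{αβ}, h⁻_{αβ} : X → ℂ` on
double indices and `G_{αβγ}, F_{αβγ} : X → ℂ` on triple indices satisfying
the bihermitian conditions
`G·F⁻¹ = h⁺_{αβ} h⁺_{βγ} h⁺_{γα}` and `G·conj F = h⁻_{αβ} h⁻_{βγ} h⁻_{γα}`
pointwise, the functions
`t_{αβ} = h⁺_{αβ} · conj h⁻_{αβ} · (h⁻_{αβ})⁻¹ · (conj h⁺_{αβ})⁻¹`
satisfy the Čech cocycle condition `t_{αβ} t_{βγ} t_{γα} = 1` pointwise. -/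
theorem bihermitian_gerbe_cech_cocycle
    {X I : Type*}
    (hp hm : I → I → X → ℂ)
    (G F : I → I → I → X → ℂ)
    (hp_ne : ∀ α β x, hp α β x ≠ 0)
    (hm_ne : ∀ α β x, hm α β x ≠ 0)
    (G_ne : ∀ α β γ x, G α β γ x ≠ 0)
    (F_ne : ∀ α β γ x, F α β γ x ≠ 0)
    (hGF : ∀ α β γ x,
      G α β γ x * (F α β γ x)⁻¹ = hp α β x * hp β γ x * hp γ α x)
    (hGFbar : ∀ α β γ x,
      G α β γ x * starRingEnd ℂ (F α β γ x) = hm α β x * hm β γ x * hm γ α x)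
    (t : I → I → X → ℂ)
    (ht : ∀ α β x, t α β x =
      hp α β x * starRingEnd ℂ (hm α β x) * (hm α β x)⁻¹ *
        (starRingEnd ℂ (hp α β x))⁻¹) :
    ∀ α β γ x, t α β x * t β γ x * t γ α x = 1 := by
  intro α β γ x
  have hG := G_ne α β γ x
  have hF := F_ne α β γ x
  have hGc : starRingEnd ℂ (G α β γ x) ≠ 0 := (map_ne_zero _).2 hG
  have hFc : starRingEnd ℂ (F α β γ x) ≠ 0 := (map_ne_zero _).2 hF
  -- With `P`, `M` the triple products of `h⁺`, `h⁻`, the product of the `t`s is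
  -- `P * conj M * M⁻¹ * (conj P)⁻¹`; substituting `P = G F⁻¹`, `M = G conj F` cancels everything.
  have key : t α β x * t β γ x * t γ α x =
      (hp α β x * hp β γ x * hp γ α x) *
        starRingEnd ℂ (hm α β x * hm β γ x * hm γ α x) *
        (hm α β x * hm β γ x * hm γ α x)⁻¹ *
        (starRingEnd ℂ (hp α β x * hp β γ x * hp γ α x))⁻¹ := by
    simp only [ht, map_mul, mul_inv]
    ring
  rw [key, ← hGF, ← hGFbar]
  simp only [map_mul, map_inv₀, Complex.conj_conj]
  field_simp
end
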